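/- (The sl₂-triple in the rational Cherednik algebra, in the Dunkl representation.) Let W ⊂ O(ℝ^r) be a finite real reflection group with reflections S, roots α_s, conjugation-invariant parameters c : S → ℂ, and let e_1,…,e_r be the standard orthonormal basis. Define endomorphisms of ℂ(x_1,…,x_r): H = Σ_i M_{x_i} ∘ D_{e_i} + (r/2)·Id − Σ_{s∈S} c_s ρ(s), E = −(1/2) Σ_i M_{x_i}^2, F = (1/2) Σ_i D_{e_i}^2, where M_{x_i} is multiplication by x_i and ρ(s) is the action of s. Then (i) H = (1/2) Σ_i (M_{x_i} ∘ D_{e_i} + D_{e_i} ∘ M_{x_i}); and (ii) [H, E] = 2E, [H, F] = −2F, and [E, F] = H. -/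

import Mathlib

open MvPolynomial

noncomputable section

/-- The matrix underlying an element of a subgroup of `GL_r(ℝ)`. -/
def matOfR {r : ℕ} {W : Subgroup (Matrix.GeneralLinearGroup (Fin r) ℝ)} (w : W) :
    Matrix (Fin r) (Fin r) ℝ :=
  ((w : Matrix.GeneralLinearGroup (Fin r) ℝ) : Matrix (Fin r) (Fin r) ℝ)

/-- The complexified linear polynomial `Σᵢ aᵢ xᵢ` with real coefficient vector `a`. -/
def linFormR {r : ℕ} (a : Fin r → ℝ) : MvPolynomial (Fin r) ℂ :=
  ∑ i, MvPolynomial.C ((a i : ℂ)) * MvPolynomial.X i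

/-- The Dunkl operator `D_a` of a real reflection group on `K = ℂ(x₁,…,x_r)`:
`D_a f = ∂_a f − Σ_{s∈S} c_s (α_s, a) (f − s·f)/α_s`. -/
def dunklR (r : ℕ) (K : Type) [Field K] [Algebra ℂ K]
    [Algebra (MvPolynomial (Fin r) ℂ) K] [IsScalarTower ℂ (MvPolynomial (Fin r) ℂ) K]
    {W : Subgroup (Matrix.GeneralLinearGroup (Fin r) ℝ)}
    (S : Finset W) (c : W → ℂ) (α : W → Fin r → ℝ)
    (ρ : W →* (K ≃ₐ[ℂ] K)) (pd : Fin r → Derivation ℂ K K)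
    (a : Fin r → ℝ) : K →ₗ[ℂ] K :=
  (∑ i, (a i : ℂ) • (pd i).toLinearMap)
    - ∑ s ∈ S, (c s * (((∑ i, α s i * a i : ℝ) : ℂ))) •
        ((LinearMap.mulLeft ℂ
            ((algebraMap (MvPolynomial (Fin r) ℂ) K (linFormR (α s)))⁻¹)).comp
          (LinearMap.id - (ρ s).toLinearMap))

/-- Multiplication by the coordinate `xᵢ`, as a `ℂ`-linear endomorphism of `K`. -/
def coordMul (r : ℕ) (K : Type) [Field K] [Algebra ℂ K]
    [Algebra (MvPolynomial (Fin r) ℂ) K] [IsScalarTower ℂ (MvPolynomial (Fin r) ℂ) K]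
    (i : Fin r) : K →ₗ[ℂ] K :=
  LinearMap.mulLeft ℂ (algebraMap (MvPolynomial (Fin r) ℂ) K (MvPolynomial.X i))

/-!
A divided difference `(1 - s)/α_s` satisfies a twisted Leibniz rule, so the commutator of `Dᵢ` with
multiplication by `y` is `∂ᵢ y` minus a sum of divided differences of `y`, each composed with its
reflection. For `y = xⱼ` the divided differences are constants, so `∑ᵢ [Dᵢ, xᵢ] = r - 2 ∑ₛ cₛ s`,
which is the symmetric form of `H`. For `y = ∑ⱼ xⱼ²`, which the reflections fix, they vanish,
leaving `[Dᵢ, ∑ⱼ xⱼ²] = 2 xᵢ`; expanding `[E, F]` with this gives the symmetric form of `H` again.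

In `∑ᵢ xᵢ Dᵢ` the factors `∑ᵢ (αₛ)ᵢ xᵢ` cancel the denominators `α_s`, so `H` is the Euler
derivation plus a scalar. Hence `[H, ·]` measures homogeneous degree: `xᵢ` has degree `1` and `Dᵢ`
has degree `-1`, so `E` and `F` have degrees `2` and `-2`.
-/

section Commutator

attribute [local instance 100] LieRing.ofAssociativeRing

theorem lie_mul_eq_lie_mul_add_mul_lie {A : Type*} [Ring A] (a b c : A) :
    ⁅a, b * c⁆ = ⁅a, b⁆ * c + b * ⁅a, c⁆ := by
  simp only [Ring.lie_def]
  noncomm_ring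

variable {k A ι : Type*} [Fintype ι] [Ring A]

theorem lie_sum_mul_self [CommRing k] [Algebra k A] {h : A} {t : k} {y : ι → A}
    (hy : ∀ i, ⁅h, y i⁆ = t • y i) : ⁅h, ∑ i, y i * y i⁆ = (2 * t) • ∑ i, y i * y i := by
  rw [lie_sum, Finset.smul_sum]
  refine Finset.sum_congr rfl fun i _ => ?_
  rw [lie_mul_eq_lie_mul_add_mul_lie, hy, smul_mul_assoc, mul_smul_comm]
  module

theorem lie_sum_mul_self_of_lie_eq [CommRing k] [Algebra k A] {q : A} {t : k} {x D : ι → A}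
    (hq : ∀ i, ⁅D i, q⁆ = t • x i) :
    ⁅q, ∑ i, D i * D i⁆ = -t • ∑ i, (x i * D i + D i * x i) := by
  rw [lie_sum, Finset.smul_sum]
  refine Finset.sum_congr rfl fun i _ => ?_
  rw [lie_mul_eq_lie_mul_add_mul_lie, ← lie_skew, hq, ← neg_smul, smul_mul_assoc,
    mul_smul_comm, smul_add]

theorem sl2_relations_of_lie_eq [Field k] [NeZero (2 : k)] [Algebra k A] {h : A} {x D : ι → A}
    (hx : ∀ i, ⁅h, x i⁆ = x i) (hD : ∀ i, ⁅h, D i⁆ = -D i)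
    (hq : ∀ i, ⁅D i, ∑ j, x j * x j⁆ = (2 : k) • x i)
    (hh : h = (1 / 2 : k) • ∑ i, (x i * D i + D i * x i))
    {e f : A} (he : e = (-(1 / 2) : k) • ∑ i, x i * x i)
    (hf : f = (1 / 2 : k) • ∑ i, D i * D i) :
    ⁅h, e⁆ = (2 : k) • e ∧ ⁅h, f⁆ = (-2 : k) • f ∧ ⁅e, f⁆ = h := by
  have hx' : ∀ i, ⁅h, x i⁆ = (1 : k) • x i := fun i => by rw [hx, one_smul]
  have hD' : ∀ i, ⁅h, D i⁆ = (-1 : k) • D i := fun i => by rw [hD, neg_one_smul]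
  have h2 : (2 : k) ≠ 0 := two_ne_zero
  refine ⟨?_, ?_, ?_⟩
  · rw [he, LieAlgebra.lie_smul, lie_sum_mul_self hx', smul_comm, mul_one]
  · rw [hf, LieAlgebra.lie_smul, lie_sum_mul_self hD', smul_comm, mul_neg_one]
  · rw [he, hf, smul_lie, LieAlgebra.lie_smul, lie_sum_mul_self_of_lie_eq hq, hh,
      smul_smul, smul_smul]
    congr 1
    field_simp

end Commutator

section Derivation

theorem lie_derivation_mulLeft {k A : Type*} [CommRing k] [CommRing A] [Algebra k A]
    (D : Derivation k A A) (y : A) :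
    ⁅(D : Module.End k A), LinearMap.mulLeft k y⁆ = LinearMap.mulLeft k (D y) := by
  ext f
  simp [Ring.lie_def, mul_comm]

variable {k K : Type*} [Field k] [Field K] [Algebra k K]

theorem derivation_ext_of_adjoin_eq_top {M : Type*} [AddCommGroup M] [Module k M] [Module K M]
    {s : Set K} (hs : IntermediateField.adjoin k s = ⊤) {D₁ D₂ : Derivation k K M}
    (h : Set.EqOn D₁ D₂ s) : D₁ = D₂ := by
  ext f
  have hf : f ∈ IntermediateField.adjoin k s := hs ▸ IntermediateField.mem_top
  induction hf using IntermediateField.adjoin_induction with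
  | mem y hy => exact h hy
  | algebraMap t => simp only [Derivation.map_algebraMap]
  | add y z _ _ hy hz => simp only [map_add, hy, hz]
  | inv y _ hy => simp only [Derivation.leibniz_inv, hy]
  | mul y z _ _ hy hz => simp only [Derivation.leibniz, hy, hz]

theorem derivation_algHom_comm_of_adjoin_eq_top {s : Set K}
    (hs : IntermediateField.adjoin k s = ⊤) {D : Derivation k K K} {g : K →ₐ[k] K}
    (h : ∀ y ∈ s, D (g y) = g (D y)) (f : K) : D (g f) = g (D f) := by
  have hf : f ∈ IntermediateField.adjoin k s := hs ▸ IntermediateField.mem_top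
  induction hf using IntermediateField.adjoin_induction with
  | mem y hy => exact h y hy
  | algebraMap t => simp only [AlgHom.commutes, Derivation.map_algebraMap, map_zero]
  | add y z _ _ hy hz => simp only [map_add, hy, hz]
  | inv y _ hy =>
    simp only [map_inv₀, Derivation.leibniz_inv, hy, smul_eq_mul, map_mul, map_neg, map_pow]
  | mul y z _ _ hy hz => simp only [map_mul, Derivation.leibniz, hy, hz, smul_eq_mul, map_add]

end Derivation

section DividedDifference

variable {k K : Type*} [CommRing k] [Field K] [Algebra k K]

/-- The divided difference operator `f ↦ (f - g f) / ℓ`, which is `0` if `ℓ = 0`. -/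
def dividedDifference (ℓ : K) (g : K →ₐ[k] K) : Module.End k K :=
  LinearMap.mulLeft k ℓ⁻¹ * (1 - g.toLinearMap)

theorem dividedDifference_apply (ℓ : K) (g : K →ₐ[k] K) (f : K) :
    dividedDifference ℓ g f = ℓ⁻¹ * (f - g f) := rfl

theorem mulLeft_mul_dividedDifference {ℓ : K} (hℓ : ℓ ≠ 0) (g : K →ₐ[k] K) :
    LinearMap.mulLeft k ℓ * dividedDifference ℓ g = 1 - g.toLinearMap := by
  ext f
  exact mul_inv_cancel_left₀ hℓ _

theorem lie_dividedDifference_mulLeft (ℓ : K) (g : K →ₐ[k] K) (y : K) :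
    ⁅dividedDifference ℓ g, LinearMap.mulLeft k y⁆ =
      LinearMap.mulLeft k (dividedDifference ℓ g y) * g.toLinearMap := by
  ext f
  simp only [Ring.lie_def, LinearMap.sub_apply, Module.End.mul_apply,
    LinearMap.mulLeft_apply, dividedDifference_apply, map_mul, AlgHom.toLinearMap_apply]
  ring

theorem lie_derivation_dividedDifference {D : Derivation k K K} {ℓ : K} (hℓ : D ℓ = ℓ)
    {g : K →ₐ[k] K} (hg : ∀ f, D (g f) = g (D f)) :
    ⁅(D : Module.End k K), dividedDifference ℓ g⁆ = -dividedDifference ℓ g := by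
  ext f
  rcases eq_or_ne ℓ 0 with rfl | h0
  · simp [Ring.lie_def, dividedDifference_apply]
  · simp only [Ring.lie_def, LinearMap.sub_apply, Module.End.mul_apply,
      Derivation.coeFn_coe, dividedDifference_apply, LinearMap.neg_apply, Derivation.leibniz,
      Derivation.leibniz_inv, hℓ, map_sub, hg, smul_eq_mul]
    field_simp
    ring

end DividedDifference

section EulerDerivation

variable {k A ι : Type*} [CommRing k] [CommRing A] [Algebra k A] [Fintype ι]

/-- The Euler derivation `∑ᵢ xᵢ ∂/∂xᵢ`. -/
def eulerDerivation (x : ι → A) (pd : ι → Derivation k A A) : Derivation k A A :=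
  ∑ i, x i • pd i

theorem coe_eulerDerivation (x : ι → A) (pd : ι → Derivation k A A) :
    (eulerDerivation x pd : Module.End k A) =
      ∑ i, LinearMap.mulLeft k (x i) * (pd i : Module.End k A) := by
  ext f
  have : eulerDerivation x pd f = (Derivation.coeFnAddMonoidHom (∑ i, x i • pd i)) f := rfl
  rw [Derivation.coeFn_coe, this, map_sum, Finset.sum_apply, LinearMap.sum_apply]
  rfl

end EulerDerivation

section Coordinates

variable {k K ι : Type*} [Field k] [Field K] [Algebra k K] [DecidableEq ι]

/-- The field `K` is generated over `k` by the family `x`, and `pd i` is the partial derivative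
`∂/∂xᵢ`. This is the encoding of `K = k(x₁, …, x_r)` used for the Dunkl operators. -/
structure IsCoordinateSystem (x : ι → K) (pd : ι → Derivation k K K) : Prop where
  adjoin_range_eq_top : IntermediateField.adjoin k (Set.range x) = ⊤
  partial_coord : ∀ i j, pd i (x j) = if i = j then 1 else 0

theorem isCoordinateSystem_of_isFractionRing [Algebra (MvPolynomial ι k) K]
    [IsScalarTower k (MvPolynomial ι k) K] [IsFractionRing (MvPolynomial ι k) K]
    {pd : ι → Derivation k K K}
    (hpd : ∀ i (q : MvPolynomial ι k), pd i (algebraMap _ K q) = algebraMap _ K (pderiv i q)) :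
    IsCoordinateSystem (fun i => algebraMap (MvPolynomial ι k) K (X i)) pd where
  adjoin_range_eq_top := by
    set F := IntermediateField.adjoin k
      (Set.range fun i => algebraMap (MvPolynomial ι k) K (X i))
    have algebraMap_mem (p : MvPolynomial ι k) : algebraMap _ K p ∈ F := by
      induction p using MvPolynomial.induction_on with
      | C t =>
        rw [← MvPolynomial.algebraMap_eq, ← IsScalarTower.algebraMap_apply]
        exact F.algebraMap_mem t
      | add p q hp hq => exact map_add (algebraMap _ K) p q ▸ add_mem hp hq
      | mul_X p i hp =>
        exact map_mul (algebraMap _ K) p (X i) ▸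
          mul_mem hp (IntermediateField.subset_adjoin k _ (Set.mem_range_self i))
    refine eq_top_iff.mpr fun f _ => ?_
    obtain ⟨p, q, -, rfl⟩ := IsFractionRing.div_surjective (A := MvPolynomial ι k) f
    exact div_mem (algebraMap_mem p) (algebraMap_mem q)
  partial_coord i j := by
    rw [hpd, pderiv_X, Pi.single_apply, apply_ite (algebraMap _ K), map_one, map_zero]
    simp only [eq_comm]

variable [Fintype ι] {x : ι → K} {pd : ι → Derivation k K K}

theorem IsCoordinateSystem.partial_linearCombination (hx : IsCoordinateSystem x pd) (i : ι)
    (a : ι → k) : pd i (Fintype.linearCombination k x a) = algebraMap k K (a i) := by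
  simp [Fintype.linearCombination_apply, hx.partial_coord, Algebra.algebraMap_eq_smul_one]

theorem IsCoordinateSystem.linearCombination_ne_zero (hx : IsCoordinateSystem x pd) {a : ι → k}
    (ha : a ≠ 0) : Fintype.linearCombination k x a ≠ 0 := by
  obtain ⟨i, hi⟩ := Function.ne_iff.mp ha
  intro h
  have := hx.partial_linearCombination i a
  rw [h, map_zero, eq_comm, map_eq_zero] at this
  exact hi this

theorem IsCoordinateSystem.partial_sum_mul_self (hx : IsCoordinateSystem x pd) (i : ι) :
    pd i (∑ j, x j * x j) = 2 * x i := by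
  simp [hx.partial_coord, two_mul, Finset.sum_add_distrib]

theorem IsCoordinateSystem.euler_coord (hx : IsCoordinateSystem x pd) (i : ι) :
    eulerDerivation x pd (x i) = x i := by
  rw [← Derivation.coeFn_coe, coe_eulerDerivation]
  simp [LinearMap.sum_apply, hx.partial_coord]

theorem IsCoordinateSystem.euler_linearCombination (hx : IsCoordinateSystem x pd) (a : ι → k) :
    eulerDerivation x pd (Fintype.linearCombination k x a) = Fintype.linearCombination k x a := by
  simp [Fintype.linearCombination_apply, hx.euler_coord]

theorem IsCoordinateSystem.lie_euler_partial (hx : IsCoordinateSystem x pd) (i : ι) :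
    ⁅eulerDerivation x pd, pd i⁆ = -pd i := by
  refine derivation_ext_of_adjoin_eq_top hx.adjoin_range_eq_top ?_
  rintro _ ⟨j, rfl⟩
  rw [Derivation.commutator_apply, hx.euler_coord, hx.partial_coord, Derivation.neg_apply,
    hx.partial_coord]
  split_ifs <;> simp

end Coordinates

section Reflection

variable {k K ι : Type*} [Field k] [Field K] [Algebra k K] [Fintype ι] {x : ι → K} {a : ι → k}
  {g : K →ₐ[k] K}

/-- The algebra endomorphism `g` acts on the coordinates `x` as the orthogonal reflection in the
hyperplane orthogonal to the non-isotropic vector `a`. -/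
structure IsReflectionAlong (x : ι → K) (a : ι → k) (g : K →ₐ[k] K) : Prop where
  dotProduct_self_ne_zero : a ⬝ᵥ a ≠ 0
  apply_coord : ∀ i, g (x i) = x i - (2 * a i / a ⬝ᵥ a) • Fintype.linearCombination k x a

namespace IsReflectionAlong

theorem ne_zero (hg : IsReflectionAlong x a g) : a ≠ 0 := by
  rintro rfl
  exact hg.dotProduct_self_ne_zero (dotProduct_zero 0)

theorem map_sum_mul_self (hg : IsReflectionAlong x a g) :
    g (∑ i, x i * x i) = ∑ i, x i * x i := by
  set ℓ := Fintype.linearCombination k x a with hℓ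
  set n := a ⬝ᵥ a with hn
  have sum_eq : ∑ i, a i * a i = n := rfl
  have expand (i : ι) : g (x i * x i) = x i * x i - (4 / n) • (ℓ * (a i • x i))
      + (4 / n ^ 2) • ((a i * a i) • (ℓ * ℓ)) := by
    rw [map_mul, hg.apply_coord, ← hℓ, ← hn]
    simp only [Algebra.smul_def, map_mul, map_div₀, map_pow, map_ofNat]
    ring
  have cancel : 4 / n ^ 2 * n = 4 / n := by
    have := hg.dotProduct_self_ne_zero
    field_simp
  simp only [map_sum, expand]
  rw [Finset.sum_add_distrib, Finset.sum_sub_distrib, ← Finset.smul_sum, ← Finset.smul_sum,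
    ← Finset.mul_sum, ← Fintype.linearCombination_apply, ← hℓ, ← Finset.sum_smul, smul_smul,
    sum_eq, cancel, sub_add_cancel]

variable [DecidableEq ι] {pd : ι → Derivation k K K}

theorem euler_comm (hg : IsReflectionAlong x a g) (hx : IsCoordinateSystem x pd) (f : K) :
    eulerDerivation x pd (g f) = g (eulerDerivation x pd f) := by
  refine derivation_algHom_comm_of_adjoin_eq_top hx.adjoin_range_eq_top ?_ f
  rintro _ ⟨i, rfl⟩
  rw [hx.euler_coord, hg.apply_coord, map_sub, Derivation.map_smul, hx.euler_coord,
    hx.euler_linearCombination]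

theorem dividedDifference_coord (hg : IsReflectionAlong x a g) (hx : IsCoordinateSystem x pd)
    (i : ι) : dividedDifference (Fintype.linearCombination k x a) g (x i) =
      algebraMap k K (2 * a i / a ⬝ᵥ a) := by
  rw [dividedDifference_apply, hg.apply_coord, sub_sub_cancel, mul_smul_comm,
    inv_mul_cancel₀ (hx.linearCombination_ne_zero hg.ne_zero), Algebra.algebraMap_eq_smul_one]

end IsReflectionAlong

end Reflection

section Dunkl

attribute [local instance 100] LieRing.ofAssociativeRing

variable {k K ι σ : Type*} [Field k] [Field K] [Algebra k K] [Fintype ι]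

/-- The Dunkl operator `Dᵢ = ∂ᵢ - ∑ₛ cₛ (αₛ)ᵢ (1 - gₛ)/αₛ` in the `i`-th coordinate direction,
for a finite family of endomorphisms `gₛ` and vectors `αₛ` indexed by an arbitrary set. -/
def dunklOperator (x : ι → K) (pd : ι → Derivation k K K) (S : Finset σ) (c : σ → k)
    (α : σ → ι → k) (g : σ → K →ₐ[k] K) (i : ι) : Module.End k K :=
  pd i - ∑ s ∈ S, (c s * α s i) • dividedDifference (Fintype.linearCombination k x (α s)) (g s)

/-- `H = ∑ᵢ xᵢ Dᵢ + (r/2) - ∑ₛ cₛ gₛ`, where `r` is the number of coordinates. -/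
def cherednikH (x : ι → K) (pd : ι → Derivation k K K) (S : Finset σ) (c : σ → k)
    (α : σ → ι → k) (g : σ → K →ₐ[k] K) : Module.End k K :=
  ∑ i, LinearMap.mulLeft k (x i) * dunklOperator x pd S c α g i +
    ((Fintype.card ι : k) / 2) • 1 - ∑ s ∈ S, c s • (g s).toLinearMap

variable (k) in
/-- `E = -½ ∑ᵢ xᵢ²`, as a multiplication operator. -/
def cherednikE (x : ι → K) : Module.End k K :=
  (-(1 / 2) : k) • ∑ i, LinearMap.mulLeft k (x i) * LinearMap.mulLeft k (x i)

/-- `F = ½ ∑ᵢ Dᵢ²`. -/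
def cherednikF (x : ι → K) (pd : ι → Derivation k K K) (S : Finset σ) (c : σ → k)
    (α : σ → ι → k) (g : σ → K →ₐ[k] K) : Module.End k K :=
  (1 / 2 : k) • ∑ i, dunklOperator x pd S c α g i * dunklOperator x pd S c α g i

variable {x : ι → K} {pd : ι → Derivation k K K} {S : Finset σ} {α : σ → ι → k}
  {g : σ → K →ₐ[k] K}

theorem lie_dunklOperator_mulLeft (c : σ → k) (i : ι) (y : K) :
    ⁅dunklOperator x pd S c α g i, LinearMap.mulLeft k y⁆ = LinearMap.mulLeft k (pd i y) -
      ∑ s ∈ S, (c s * α s i) • (LinearMap.mulLeft k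
        (dividedDifference (Fintype.linearCombination k x (α s)) (g s) y) *
          (g s).toLinearMap) := by
  simp only [dunklOperator, sub_lie, sum_lie, smul_lie, lie_derivation_mulLeft,
    lie_dividedDifference_mulLeft]

variable [DecidableEq ι]

theorem lie_dunklOperator_sum_mul_self (hx : IsCoordinateSystem x pd)
    (hg : ∀ s ∈ S, IsReflectionAlong x (α s) (g s)) (c : σ → k) (i : ι) :
    ⁅dunklOperator x pd S c α g i, LinearMap.mulLeft k (∑ j, x j * x j)⁆ =
      (2 : k) • LinearMap.mulLeft k (x i) := by
  rw [lie_dunklOperator_mulLeft, hx.partial_sum_mul_self,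
    Finset.sum_eq_zero (s := S) fun s hs => ?_, sub_zero]
  · ext f
    simp only [LinearMap.mulLeft_apply, LinearMap.add_apply, two_smul, two_mul, add_mul]
  · rw [dividedDifference_apply, (hg s hs).map_sum_mul_self, sub_self, mul_zero,
      LinearMap.mulLeft_zero_eq_zero, zero_mul, smul_zero]

theorem lie_dunklOperator_coord (hx : IsCoordinateSystem x pd)
    (hg : ∀ s ∈ S, IsReflectionAlong x (α s) (g s)) (c : σ → k) (i j : ι) :
    ⁅dunklOperator x pd S c α g i, LinearMap.mulLeft k (x j)⁆ =
      (if i = j then 1 else 0) -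
        ∑ s ∈ S, (2 * c s * (α s i * α s j) / α s ⬝ᵥ α s) • (g s).toLinearMap := by
  rw [lie_dunklOperator_mulLeft, hx.partial_coord]
  congr 1
  · split_ifs <;> simp [Module.End.one_eq_id]
  · refine Finset.sum_congr rfl fun s hs => ?_
    rw [(hg s hs).dividedDifference_coord hx]
    ext f
    simp only [LinearMap.smul_apply, Module.End.mul_apply, LinearMap.mulLeft_apply,
      ← Algebra.smul_def, smul_smul]
    congr 1
    ring

theorem sum_dunklOperator_mul_coord (hx : IsCoordinateSystem x pd)
    (hg : ∀ s ∈ S, IsReflectionAlong x (α s) (g s)) (c : σ → k) :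
    ∑ i, dunklOperator x pd S c α g i * LinearMap.mulLeft k (x i) =
      ∑ i, LinearMap.mulLeft k (x i) * dunklOperator x pd S c α g i +
        (Fintype.card ι : k) • 1 - (2 : k) • ∑ s ∈ S, c s • (g s).toLinearMap := by
  have trace (s) (hs : s ∈ S) : ∑ i, 2 * c s * (α s i * α s i) / α s ⬝ᵥ α s = 2 * c s := by
    rw [← Finset.sum_div, ← Finset.mul_sum, ← dotProduct,
      mul_div_cancel_right₀ _ (hg s hs).dotProduct_self_ne_zero]
  have sum_lie : ∑ i, ⁅dunklOperator x pd S c α g i, LinearMap.mulLeft k (x i)⁆ =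
      (Fintype.card ι : k) • 1 - (2 : k) • ∑ s ∈ S, c s • (g s).toLinearMap := by
    simp only [lie_dunklOperator_coord hx hg, if_true, Finset.sum_sub_distrib]
    rw [Finset.sum_comm, Finset.smul_sum]
    congr 1
    · simp [Nat.cast_smul_eq_nsmul]
    · refine Finset.sum_congr rfl fun s hs => ?_
      rw [← Finset.sum_smul, trace s hs, mul_smul]
  rw [add_sub_assoc, ← sum_lie, ← Finset.sum_add_distrib]
  simp only [Ring.lie_def, add_sub_cancel]

theorem sum_coord_mul_dunklOperator (hx : IsCoordinateSystem x pd)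
    (hα : ∀ s ∈ S, α s ≠ 0) (c : σ → k) :
    ∑ i, LinearMap.mulLeft k (x i) * dunklOperator x pd S c α g i =
      (eulerDerivation x pd : Module.End k K) - ∑ s ∈ S, c s • (1 - (g s).toLinearMap) := by
  simp only [dunklOperator, mul_sub, Finset.sum_sub_distrib, Finset.mul_sum, coe_eulerDerivation]
  congr 1
  rw [Finset.sum_comm]
  refine Finset.sum_congr rfl fun s hs => ?_
  rw [← mulLeft_mul_dividedDifference (hx.linearCombination_ne_zero (hα s hs)) (g s)]
  ext f
  simp only [LinearMap.sum_apply, Module.End.mul_apply, LinearMap.mulLeft_apply,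
    LinearMap.smul_apply, Fintype.linearCombination_apply, Finset.sum_mul, Finset.smul_sum]
  refine Finset.sum_congr rfl fun i _ => ?_
  rw [mul_smul_comm, smul_mul_assoc, mul_smul]

theorem lie_euler_dunklOperator (hx : IsCoordinateSystem x pd)
    (hg : ∀ s ∈ S, IsReflectionAlong x (α s) (g s)) (c : σ → k) (i : ι) :
    ⁅(eulerDerivation x pd : Module.End k K), dunklOperator x pd S c α g i⁆ =
      -dunklOperator x pd S c α g i := by
  have lie_term (s) (hs : s ∈ S) :=
    lie_derivation_dividedDifference (hx.euler_linearCombination (α s)) ((hg s hs).euler_comm hx)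
  rw [dunklOperator, lie_sub, ← Derivation.commutator_coe_linear_map, hx.lie_euler_partial,
    Derivation.coe_neg_linearMap, lie_sum, neg_sub', ← Finset.sum_neg_distrib]
  congr 1
  refine Finset.sum_congr rfl fun s hs => ?_
  exact (LieAlgebra.lie_smul _ _ _).trans (by rw [lie_term s hs, smul_neg])

theorem cherednikH_eq_euler_add (hx : IsCoordinateSystem x pd) (hα : ∀ s ∈ S, α s ≠ 0)
    (c : σ → k) :
    cherednikH x pd S c α g = (eulerDerivation x pd : Module.End k K) +
      ((Fintype.card ι : k) / 2 - ∑ s ∈ S, c s) • 1 := by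
  rw [cherednikH, sum_coord_mul_dunklOperator hx hα]
  simp only [smul_sub, Finset.sum_sub_distrib, sub_smul, Finset.sum_smul]
  abel

theorem lie_cherednikH (hx : IsCoordinateSystem x pd) (hα : ∀ s ∈ S, α s ≠ 0) (c : σ → k)
    (A : Module.End k K) :
    ⁅cherednikH x pd S c α g, A⁆ = ⁅(eulerDerivation x pd : Module.End k K), A⁆ := by
  rw [cherednikH_eq_euler_add hx hα, add_lie, smul_lie, (Commute.one_left A).lie_eq, smul_zero,
    add_zero]

theorem cherednikH_eq_symmetrized [NeZero (2 : k)] (hx : IsCoordinateSystem x pd)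
    (hg : ∀ s ∈ S, IsReflectionAlong x (α s) (g s)) (c : σ → k) :
    cherednikH x pd S c α g = (1 / 2 : k) • ∑ i,
      (LinearMap.mulLeft k (x i) * dunklOperator x pd S c α g i +
        dunklOperator x pd S c α g i * LinearMap.mulLeft k (x i)) := by
  have h2 : (2 : k) ≠ 0 := two_ne_zero
  rw [cherednikH, Finset.sum_add_distrib, sum_dunklOperator_mul_coord hx hg]
  match_scalars <;> field_simp
  norm_num

theorem cherednik_sl2_triple_general [NeZero (2 : k)] (hx : IsCoordinateSystem x pd)
    (hg : ∀ s ∈ S, IsReflectionAlong x (α s) (g s)) (c : σ → k) :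
    cherednikH x pd S c α g = (1 / 2 : k) • ∑ i,
        (LinearMap.mulLeft k (x i) * dunklOperator x pd S c α g i +
          dunklOperator x pd S c α g i * LinearMap.mulLeft k (x i)) ∧
      ⁅cherednikH x pd S c α g, cherednikE k x⁆ = (2 : k) • cherednikE k x ∧
      ⁅cherednikH x pd S c α g, cherednikF x pd S c α g⁆ =
        (-2 : k) • cherednikF x pd S c α g ∧
      ⁅cherednikE k x, cherednikF x pd S c α g⁆ = cherednikH x pd S c α g := by
  have hα (s) (hs : s ∈ S) : α s ≠ 0 := (hg s hs).ne_zero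
  have sum_mul_self : ∑ j, LinearMap.mulLeft k (x j) * LinearMap.mulLeft k (x j) =
      LinearMap.mulLeft k (∑ j, x j * x j) := by
    ext f
    simp [LinearMap.sum_apply, Finset.sum_mul, mul_assoc]
  refine ⟨cherednikH_eq_symmetrized hx hg c, sl2_relations_of_lie_eq (fun i => ?_) (fun i => ?_)
    (fun i => ?_) (cherednikH_eq_symmetrized hx hg c) rfl rfl⟩
  · rw [lie_cherednikH hx hα, lie_derivation_mulLeft, hx.euler_coord]
  · rw [lie_cherednikH hx hα, lie_euler_dunklOperator hx hg]
  · rw [sum_mul_self, lie_dunklOperator_sum_mul_self hx hg]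

end Dunkl

section RealReflectionGroup

variable {r : ℕ} {W : Subgroup (Matrix.GeneralLinearGroup (Fin r) ℝ)}

theorem matOfR_inv {w : W} (hw : (matOfR w).transpose * matOfR w = 1) :
    matOfR w⁻¹ = (matOfR w).transpose := by
  rw [← Matrix.inv_eq_left_inv hw]
  exact Matrix.coe_units_inv _

theorem transpose_apply_of_mulVec_eq_reflection {n R : Type*} [Fintype n] [DecidableEq n] [Field R]
    {A : Matrix n n R} {a : n → R}
    (hA : ∀ v, A.mulVec v = v - (2 * (∑ i, a i * v i) / ∑ i, a i * a i) • a) (i j : n) :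
    A.transpose i j = (if j = i then 1 else 0) - 2 * a i / (a ⬝ᵥ a) * a j := by
  have := congrFun (hA (Pi.single i 1)) j
  rw [Matrix.mulVec_single_one, Matrix.col_apply] at this
  simp only [Matrix.transpose_apply, this, Pi.sub_apply, Pi.smul_apply, Pi.single_apply, mul_ite,
    mul_one, mul_zero, Finset.sum_ite_eq', Finset.mem_univ, if_true, smul_eq_mul, dotProduct]

variable {K : Type} [Field K] [Algebra ℂ K] [Algebra (MvPolynomial (Fin r) ℂ) K]
  [IsScalarTower ℂ (MvPolynomial (Fin r) ℂ) K]

theorem algebraMap_linFormR (a : Fin r → ℝ) :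
    algebraMap (MvPolynomial (Fin r) ℂ) K (linFormR a) =
      Fintype.linearCombination ℂ (fun i => algebraMap (MvPolynomial (Fin r) ℂ) K (X i))
        (fun i => (a i : ℂ)) := by
  simp only [linFormR, map_sum, map_mul, Fintype.linearCombination_apply, Algebra.smul_def,
    ← MvPolynomial.algebraMap_eq, ← IsScalarTower.algebraMap_apply]

theorem isReflectionAlong_of_mulVec {s : W} (hs : (matOfR s).transpose * matOfR s = 1)
    {a : Fin r → ℝ} (ha : a ≠ 0)
    (hrefl : ∀ v, (matOfR s).mulVec v = v - (2 * (∑ i, a i * v i) / ∑ i, a i * a i) • a)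
    {g : K →ₐ[ℂ] K}
    (hg : ∀ i, g (algebraMap (MvPolynomial (Fin r) ℂ) K (X i)) =
      algebraMap (MvPolynomial (Fin r) ℂ) K (∑ j, C (matOfR s⁻¹ i j : ℂ) * X j)) :
    IsReflectionAlong (fun i => algebraMap (MvPolynomial (Fin r) ℂ) K (X i))
      (fun i => (a i : ℂ)) g := by
  have dotProduct_cast : (fun i => (a i : ℂ)) ⬝ᵥ (fun i => (a i : ℂ)) = ((a ⬝ᵥ a : ℝ) : ℂ) :=
    (RingHom.map_dotProduct Complex.ofRealHom a a).symm
  refine ⟨?_, fun i => ?_⟩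
  · rwa [dotProduct_cast, Complex.ofReal_ne_zero, ne_eq, dotProduct_self_eq_zero]
  · rw [hg, ← linFormR, algebraMap_linFormR, dotProduct_cast]
    simp only [matOfR_inv hs, transpose_apply_of_mulVec_eq_reflection hrefl,
      Fintype.linearCombination_apply, Complex.ofReal_sub, Complex.ofReal_mul, Complex.ofReal_div,
      sub_smul, Finset.sum_sub_distrib, Finset.smul_sum, mul_smul, Complex.ofReal_ofNat]
    simp

theorem dunklR_single_one (S : Finset W) (c : W → ℂ) (α : W → Fin r → ℝ) (ρ : W →* (K ≃ₐ[ℂ] K))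
    (pd : Fin r → Derivation ℂ K K) (i : Fin r) :
    dunklR r K S c α ρ pd (Pi.single i 1) =
      dunklOperator (fun j => algebraMap (MvPolynomial (Fin r) ℂ) K (X j)) pd S c
        (fun s j => (α s j : ℂ)) (fun s => (ρ s : K →ₐ[ℂ] K)) i := by
  have sum_partial : ∑ j, ((Pi.single i 1 : Fin r → ℝ) j : ℂ) • (pd j : K →ₗ[ℂ] K) = pd i := by
    simp [Pi.single_apply, apply_ite Complex.ofReal, ite_smul]
  have sum_root (s : W) : ∑ j, α s j * (Pi.single i 1 : Fin r → ℝ) j = α s i := by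
    simp [Pi.single_apply]
  simp only [dunklR, dunklOperator, sum_root, algebraMap_linFormR]
  rw [← sum_partial]
  rfl

end RealReflectionGroup

/-- **The `sl₂`-triple in the rational Cherednik algebra, in the Dunkl representation.**
For a finite real reflection group `W ⊆ O(ℝ^r)` with reflections `S`, roots `α_s`,
conjugation-invariant parameters `c`, set (as endomorphisms of `K = ℂ(x₁,…,x_r)`)
`H = Σᵢ xᵢ D_{eᵢ} + (r/2)·Id − Σ_s c_s ρ(s)`, `E = −(1/2)Σᵢ xᵢ²`, `F = (1/2)Σᵢ D_{eᵢ}²`.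
Then (i) `H = (1/2)Σᵢ (xᵢ D_{eᵢ} + D_{eᵢ} xᵢ)`, and (ii) `[H,E] = 2E`, `[H,F] = −2F`,
`[E,F] = H`. -/
theorem cherednik_sl2_triple (r : ℕ) (hr : 1 ≤ r)
    (K : Type) [Field K] [Algebra ℂ K]
    [Algebra (MvPolynomial (Fin r) ℂ) K] [IsScalarTower ℂ (MvPolynomial (Fin r) ℂ) K]
    [IsFractionRing (MvPolynomial (Fin r) ℂ) K]
    (W : Subgroup (Matrix.GeneralLinearGroup (Fin r) ℝ)) [Finite W]
    (hOrth : ∀ w : W, (Matrix.transpose (matOfR w)) * matOfR w = 1)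
    (S : Finset W)
    (hS : ∀ s : W, s ∈ S ↔
      Matrix.rank ((1 : Matrix (Fin r) (Fin r) ℝ) - matOfR s) = 1)
    (α : W → Fin r → ℝ)
    (hα : ∀ s ∈ S, α s ≠ 0)
    (hrefl : ∀ s ∈ S, ∀ v : Fin r → ℝ,
      Matrix.mulVec (matOfR s) v
        = v - (2 * (∑ i, α s i * v i) / (∑ i, α s i * α s i)) • α s)
    (c : W → ℂ)
    (hc : ∀ (g s : W), s ∈ S → c (g * s * g⁻¹) = c s)
    (ρ : W →* (K ≃ₐ[ℂ] K))
    (hρ : ∀ (w : W) (i : Fin r),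
      ρ w (algebraMap (MvPolynomial (Fin r) ℂ) K (MvPolynomial.X i)) =
        algebraMap (MvPolynomial (Fin r) ℂ) K
          (∑ j, MvPolynomial.C ((matOfR w⁻¹ i j : ℂ)) * MvPolynomial.X j))
    (pd : Fin r → Derivation ℂ K K)
    (hpd : ∀ (i : Fin r) (q : MvPolynomial (Fin r) ℂ),
      pd i (algebraMap (MvPolynomial (Fin r) ℂ) K q)
        = algebraMap (MvPolynomial (Fin r) ℂ) K (MvPolynomial.pderiv i q)) :
    ∀ HH EE FF : K →ₗ[ℂ] K,
      HH = (∑ i, (coordMul r K i).comp (dunklR r K S c α ρ pd (Pi.single i 1)))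
            + ((r : ℂ) / 2) • (LinearMap.id : K →ₗ[ℂ] K)
            - ∑ s ∈ S, c s • (ρ s).toLinearMap →
      EE = (-(1/2) : ℂ) • ∑ i, (coordMul r K i).comp (coordMul r K i) →
      FF = ((1/2) : ℂ) • ∑ i, (dunklR r K S c α ρ pd (Pi.single i 1)).comp
              (dunklR r K S c α ρ pd (Pi.single i 1)) →
      (HH = ((1/2) : ℂ) •
          ∑ i, ((coordMul r K i).comp (dunklR r K S c α ρ pd (Pi.single i 1))
            + (dunklR r K S c α ρ pd (Pi.single i 1)).comp (coordMul r K i))) ∧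
      HH.comp EE - EE.comp HH = (2 : ℂ) • EE ∧
      HH.comp FF - FF.comp HH = (-2 : ℂ) • FF ∧
      EE.comp FF - FF.comp EE = HH := by
  rintro _ _ _ rfl rfl rfl
  have card_eq : (r : ℂ) = Fintype.card (Fin r) := by rw [Fintype.card_fin]
  simp only [dunklR_single_one, card_eq]
  exact cherednik_sl2_triple_general (isCoordinateSystem_of_isFractionRing hpd)
    (fun s hs => isReflectionAlong_of_mulVec (hOrth s) (hα s hs) (hrefl s hs) (hρ s)) c

end
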